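/- Let f > 0 and g > 0 be real numbers, and set θ* = f/(f + g). Then 0 ≤ θ* < 1 and ln(1 + f/g) = (1 − θ*)·(f/g) − (θ* + ln(1 − θ*)); moreover, for every θ ∈ [0,1) one has (1 − θ)·(f/g) − (θ + ln(1 − θ)) ≥ ln(1 + f/g), with equality only at θ = θ*. -/

import Mathlib

/-!
Put `s = f / g` and `x = (1 - θ) * (1 + s)`. The gap between the bound and `log (1 + s)` is exactly
`x - 1 - log x`, which is nonnegative and vanishes only at `x = 1`, that is, at `θ = s / (1 + s)`.
-/

open Real

theorem one_sub_mul_one_add_eq_one_iff {K : Type*} [DivisionRing K] {s θ : K} (hs : 1 + s ≠ 0) :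
    (1 - θ) * (1 + s) = 1 ↔ θ = s / (1 + s) := by
  rw [eq_div_iff hs, sub_mul, one_mul, add_sub_assoc, add_eq_left, sub_eq_zero, eq_comm]

theorem div_div_one_add_div {K : Type*} [DivisionSemiring K] (f : K) {g : K} (hg : g ≠ 0) :
    f / g / (1 + f / g) = f / (f + g) := by
  rw [one_add_div hg, div_div_div_cancel_right₀ hg, add_comm g f]

theorem log_eq_sub_one_iff_of_pos {x : ℝ} (hx : 0 < x) : log x = x - 1 ↔ x = 1 := by
  refine ⟨fun h => ?_, fun h => by rw [h, log_one, sub_self]⟩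
  by_contra hne
  exact (log_lt_sub_one_of_pos hx hne).ne h

section LagrangianDualBound

variable {s θ : ℝ}

/-- The bound `(1 - θ) * s - h(θ)` on `log (1 + s)` given by the Lagrangian dual transform, with
`h(θ) = θ + log (1 - θ)`; here `s` is the ratio `f / g` and `θ` the auxiliary variable. It is meant
for `θ < 1`. -/
noncomputable def lagrangianDualBound (s θ : ℝ) : ℝ :=
  (1 - θ) * s - (θ + log (1 - θ))

theorem lagrangianDualBound_sub_log_one_add (hs : 0 < 1 + s) (hθ : θ < 1) :
    lagrangianDualBound s θ - log (1 + s) =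
      (1 - θ) * (1 + s) - 1 - log ((1 - θ) * (1 + s)) := by
  rw [lagrangianDualBound, log_mul (sub_pos.2 hθ).ne' hs.ne']
  ring

theorem log_one_add_le_lagrangianDualBound (hs : 0 < 1 + s) (hθ : θ < 1) :
    log (1 + s) ≤ lagrangianDualBound s θ := by
  rw [← sub_nonneg, lagrangianDualBound_sub_log_one_add hs hθ, sub_nonneg]
  exact log_le_sub_one_of_pos (mul_pos (sub_pos.2 hθ) hs)

theorem lagrangianDualBound_eq_log_one_add_iff (hs : 0 < 1 + s) (hθ : θ < 1) :
    lagrangianDualBound s θ = log (1 + s) ↔ θ = s / (1 + s) := by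
  have hx : 0 < (1 - θ) * (1 + s) := mul_pos (sub_pos.2 hθ) hs
  rw [← sub_eq_zero, lagrangianDualBound_sub_log_one_add hs hθ, sub_eq_zero, eq_comm,
    log_eq_sub_one_iff_of_pos hx, one_sub_mul_one_add_eq_one_iff hs.ne']

end LagrangianDualBound

theorem lagrangian_dual_transform_tight_general {f g : ℝ} (hg : g ≠ 0) (hfg : 0 < 1 + f / g) :
    f / (f + g) < 1 ∧
    ∀ θ : ℝ, θ < 1 →
      log (1 + f / g) ≤ (1 - θ) * (f / g) - (θ + log (1 - θ)) ∧
      ((1 - θ) * (f / g) - (θ + log (1 - θ)) = log (1 + f / g) ↔ θ = f / (f + g)) := by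
  rw [← div_div_one_add_div f hg]
  exact ⟨(div_lt_one hfg).2 (lt_one_add _), fun θ hθ =>
    ⟨log_one_add_le_lagrangianDualBound hfg hθ, lagrangianDualBound_eq_log_one_add_iff hfg hθ⟩⟩

/-- Lagrangian dual transform tightness (Lemma 2, first equality):
the bound `(1 − θ)(f/g) − (θ + ln(1 − θ))` on `ln(1 + f/g)` is achieved
exactly at `θ* = f/(f+g)`. -/
theorem lagrangian_dual_transform_tight (f g : ℝ) (hf : 0 < f) (hg : 0 < g) :
    (0 ≤ f / (f + g) ∧ f / (f + g) < 1) ∧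
    (Real.log (1 + f / g) =
      (1 - f / (f + g)) * (f / g) - (f / (f + g) + Real.log (1 - f / (f + g)))) ∧
    (∀ θ : ℝ, 0 ≤ θ → θ < 1 →
      (1 - θ) * (f / g) - (θ + Real.log (1 - θ)) ≥ Real.log (1 + f / g) ∧
      ((1 - θ) * (f / g) - (θ + Real.log (1 - θ)) = Real.log (1 + f / g) →
        θ = f / (f + g))) := by
  obtain ⟨hlt, hbound⟩ := lagrangian_dual_transform_tight_general hg.ne' (f := f) (by positivity)
  exact ⟨⟨by positivity, hlt⟩, ((hbound _ hlt).2.2 rfl).symm,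
    fun θ _ hθ => ⟨(hbound θ hθ).1, (hbound θ hθ).2.1⟩⟩
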